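/- Local-to-global variance contraction: Suppose 𝒞 is an (a_0, …, a_{d−2})-local-spectral expander with each a_k < 1, and set s_k := 2/(1 + a_k). Define v_0 := s_0 and v_k := s_k − (s_k − 1)/v_{k−1}. Then for every 2 ≤ k ≤ d, λ₂(P_k^∨) = λ₂(P_{k−1}^∧) ≤ 1/v_{k−2}. -/

import Mathlib

/-!
Write `E_m` for the expectation under `π_m` and `U_m`, `D_m` for the up and down operators. Between
consecutive levels they are adjoint Markov operators, because both are read off the same weights
on the pairs `R ⊂ T` (`adjPair_level`). The equality of the two second eigenvalues is then the
fact that `DU` and `UD` have the same norm on mean zero functions (`transfer_bound`,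
`AdjPair.lamTwo_eq`).

For the bound, the same duality in the link of a face `S` of level `j` turns the expansion
hypothesis `λ₂(G_S) ≤ a_j`, that is `‖Dφ‖² ≤ l ‖φ‖²` with `l = (1 + a_j) / 2`, into
`Var_{S,1}(U f) ≤ l Var_{S,2}(f)` (`local_var`). Averaging over `S` gives, for `f` on level `j + 2`
with `g = U f` and `h = U g`,
`E_{j+1} g² - E_j h² ≤ l (E_{j+2} f² - E_j h²)` (`global_step`).
Inserting the inductive bound `E_j h² ≤ E_{j+1} g² / v_{j-1}` gives
`E_{j+1} g² ≤ E_{j+2} f² / v_j` for mean zero `f` (`global_contraction`), and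
`E_{j+1} g² = ⟨f, DU f⟩`.

The recursion needs `v_j > 1`, hence `a_j > -1`. Test functions on the link show `a_j ≥ -1`, with
equality possible only for `j = d - 2` (`local_const_pos`).
-/

open Finset

noncomputable section

variable {E : Type*} [Fintype E] [DecidableEq E]

/-- The faces of cardinality `k` of the set family `C`. -/
def faces (C : Finset (Finset E)) (k : ℕ) : Finset (Finset E) :=
  C.filter fun S => S.card = k

/-- `C` is a pure simplicial complex of dimension `d`: it is nonempty, closed under
taking subsets, and every face is contained in a face of cardinality `d`
(hence all maximal faces have cardinality `d`). -/
def IsPureComplex (C : Finset (Finset E)) (d : ℕ) : Prop :=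
  C.Nonempty ∧ (∀ S ∈ C, ∀ T ⊆ S, T ∈ C) ∧ (∀ S ∈ C, ∃ T ∈ C, S ⊆ T ∧ T.card = d)

/-- `pid` is a probability distribution with full support on the top level faces. -/
def IsTopDist (C : Finset (Finset E)) (d : ℕ) (pid : Finset E → ℝ) : Prop :=
  (∀ T ∈ faces C d, 0 < pid T) ∧ ∑ T ∈ faces C d, pid T = 1

/-- The (unnormalised) weight of a face: total top-level mass above it. -/
def wgt (C : Finset (Finset E)) (d : ℕ) (pid : Finset E → ℝ) (S : Finset E) : ℝ :=
  ∑ T ∈ (faces C d).filter (fun T => S ⊆ T), pid T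

/-- The distribution `π_k` at level `k`: `π_k(S) ∝ Σ_{T ∈ C(d), T ⊇ S} π_d(T)`. -/
def piLev (C : Finset (Finset E)) (d : ℕ) (pid : Finset E → ℝ) (k : ℕ) (S : Finset E) : ℝ :=
  if S ∈ faces C k then wgt C d pid S / ∑ T ∈ faces C k, wgt C d pid T else 0

/-- The level-`k` faces of the link of the face `S`. -/
def linkFaces (C : Finset (Finset E)) (S : Finset E) (k : ℕ) : Finset (Finset E) :=
  Finset.univ.powerset.filter fun T => S ∩ T = ∅ ∧ S ∪ T ∈ C ∧ T.card = k

/-- The distribution `π_{S,k}` on the level-`k` faces of the link of `S`: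
`π_{S,k}(T) ∝ π_{|S|+k}(S ∪ T)`. -/
def linkPi (C : Finset (Finset E)) (d : ℕ) (pid : Finset E → ℝ) (S : Finset E) (k : ℕ)
    (T : Finset E) : ℝ :=
  if T ∈ linkFaces C S k then
    piLev C d pid (S.card + k) (S ∪ T) /
      ∑ T' ∈ linkFaces C S k, piLev C d pid (S.card + k) (S ∪ T')
  else 0

/-- Generic up operator with respect to a measure `ν` on a collection `dom` of faces:
from `R` move to a superset `T ∈ dom` with probability proportional to `ν T`.
Acts on functions on `dom`, producing a function on the level below. -/
def upWith (ν : Finset E → ℝ) (dom : Finset (Finset E)) (f : Finset E → ℝ) (R : Finset E) : ℝ :=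
  ∑ T ∈ dom.filter (fun T => R ⊆ T),
    (ν T / ∑ T' ∈ dom.filter (fun T' => R ⊆ T'), ν T') * f T

/-- The up operator `P_k^↑`, acting on functions on `C(k+1)` and producing a function
on `C(k)`. -/
def upOp (C : Finset (Finset E)) (d : ℕ) (pid : Finset E → ℝ) (k : ℕ) :
    (Finset E → ℝ) → Finset E → ℝ :=
  upWith (piLev C d pid (k+1)) (faces C (k+1))

/-- The down operator `P_k^↓` (uniform removal of an element), acting on functions
on `C(k-1)` and producing a function on `C(k)`. -/
def downOp (k : ℕ) (g : Finset E → ℝ) (S : Finset E) : ℝ :=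
  (1 / (k : ℝ)) * ∑ i ∈ S, g (S.erase i)

/-- The down-up walk `P_k^∨ = P_k^↓ P_{k-1}^↑` on `C(k)`, as an operator on functions. -/
def downUp (C : Finset (Finset E)) (d : ℕ) (pid : Finset E → ℝ) (k : ℕ)
    (f : Finset E → ℝ) : Finset E → ℝ :=
  downOp k (upOp C d pid (k-1) f)

/-- The up-down walk `P_k^∧ = P_k^↑ P_{k+1}^↓` on `C(k)`, as an operator on functions. -/
def upDown (C : Finset (Finset E)) (d : ℕ) (pid : Finset E → ℝ) (k : ℕ)
    (f : Finset E → ℝ) : Finset E → ℝ :=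
  upOp C d pid k (downOp (k+1) f)

/-- The up operator `P_{S,k}^↑` on the link of `S`, acting on functions on `C_S(k+1)`
and producing a function on `C_S(k)`. -/
def linkUp (C : Finset (Finset E)) (d : ℕ) (pid : Finset E → ℝ) (S : Finset E) (k : ℕ) :
    (Finset E → ℝ) → Finset E → ℝ :=
  upWith (linkPi C d pid S (k+1)) (linkFaces C S (k+1))

/-- The up-down walk `P_{S,k}^∧` on the level-`k` faces of the link of `S`. -/
def linkUpDown (C : Finset (Finset E)) (d : ℕ) (pid : Finset E → ℝ) (S : Finset E) (k : ℕ)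
    (f : Finset E → ℝ) : Finset E → ℝ :=
  linkUp C d pid S k (downOp (k+1) f)

/-- The local walk `G_S := 2 P_{S,1}^∧ - I` on the vertices of the link of `S`. -/
def localWalk (C : Finset (Finset E)) (d : ℕ) (pid : Finset E → ℝ) (S : Finset E)
    (f : Finset E → ℝ) (T : Finset E) : ℝ :=
  2 * linkUpDown C d pid S 1 f T - f T

/-- Variance of `f` with respect to the measure `μ` on `dom`. -/
def pVar (μ : Finset E → ℝ) (dom : Finset (Finset E)) (f : Finset E → ℝ) : ℝ :=
  (∑ x ∈ dom, μ x * f x ^ 2) - (∑ x ∈ dom, μ x * f x) ^ 2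

/-- Relative entropy `Ent_μ(f) = E_μ[f log f] - E_μ[f] log E_μ[f]` of `f` with respect to
the measure `μ` on `dom` (note `Real.log 0 = 0`, giving the convention `0 log 0 = 0`). -/
def pEnt (μ : Finset E → ℝ) (dom : Finset (Finset E)) (f : Finset E → ℝ) : ℝ :=
  (∑ x ∈ dom, μ x * (f x * Real.log (f x))) -
    (∑ x ∈ dom, μ x * f x) * Real.log (∑ x ∈ dom, μ x * f x)

/-- The Dirichlet form `𝔈_P(f,g) = Σ_x μ(x) f(x) ((I - P) g)(x)` of a Markov operator `P`
reversible with respect to `μ` on `dom`. -/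
def pDiri (μ : Finset E → ℝ) (dom : Finset (Finset E))
    (P : (Finset E → ℝ) → Finset E → ℝ) (f g : Finset E → ℝ) : ℝ :=
  ∑ x ∈ dom, μ x * f x * (g x - P g x)

/-- The second largest eigenvalue of a Markov operator `P` reversible with respect to the
distribution `μ` on `dom`, via the variational characterisation: the supremum of Rayleigh
quotients `⟨f, Pf⟩_μ / ⟨f, f⟩_μ` over `f` orthogonal to the constants in `L²(μ)`. -/
noncomputable def lamTwo (μ : Finset E → ℝ) (dom : Finset (Finset E))
    (P : (Finset E → ℝ) → Finset E → ℝ) : ℝ :=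
  sSup {r : ℝ | ∃ f : Finset E → ℝ,
    (∑ x ∈ dom, μ x * f x = 0) ∧ (∑ x ∈ dom, μ x * f x ^ 2 ≠ 0) ∧
    r = (∑ x ∈ dom, μ x * f x * P f x) / ∑ x ∈ dom, μ x * f x ^ 2}

/-- The modified log-Sobolev constant `ρ(P)` of a Markov operator `P` reversible with
respect to `μ` on `dom`. -/
noncomputable def mlsConst (μ : Finset E → ℝ) (dom : Finset (Finset E))
    (P : (Finset E → ℝ) → Finset E → ℝ) : ℝ :=
  sInf {r : ℝ | ∃ f : Finset E → ℝ, (∀ x ∈ dom, 0 < f x) ∧ pEnt μ dom f ≠ 0 ∧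
    r = pDiri μ dom P f (fun x => Real.log (f x)) / pEnt μ dom f}

/-- The sequence `v_k` of the contraction recursion: with `s_k := 2/(1 + a_k)`,
`v_0 = s_0` and `v_k = s_k - (s_k - 1)/v_{k-1}`. -/
noncomputable def vOf (a : ℕ → ℝ) : ℕ → ℝ
  | 0 => 2 / (1 + a 0)
  | k + 1 => 2 / (1 + a (k+1)) - (2 / (1 + a (k+1)) - 1) / vOf a k

set_option linter.unusedSectionVars false

/-! ### Adjoint pairs of Markov operators -/

/-- An adjoint pair of Markov operators between two finite weighted sets: `U` sends functions
on `Y` to functions on `X`, `D` sends functions on `X` to functions on `Y`, both fix the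
constants, and they are adjoint for the weights `μ` and `ν`. The field `sq` is Jensen's
inequality for `D`. -/
structure AdjPair {α : Type*} (X Y : Finset α) (μ ν : α → ℝ) (U D : (α → ℝ) → α → ℝ) :
    Prop where
  μ_nonneg : ∀ x ∈ X, 0 ≤ μ x
  ν_nonneg : ∀ y ∈ Y, 0 ≤ ν y
  adj : ∀ f g, ∑ x ∈ X, μ x * g x * U f x = ∑ y ∈ Y, ν y * D g y * f y
  U_one : ∀ x ∈ X, U (fun _ => 1) x = 1
  D_one : ∀ y ∈ Y, D (fun _ => 1) y = 1
  sq : ∀ g, ∀ y ∈ Y, D g y ^ 2 ≤ D (fun x => g x ^ 2) y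

section Abstract

variable {α : Type*} {X Y : Finset α} {μ ν : α → ℝ} {U D : (α → ℝ) → α → ℝ}

/-- If `U` and `D` are adjoint and preserve mean zero, a bound on `UD` on mean zero functions
gives the same bound on `DU`. -/
lemma transfer_bound (hν : ∀ y ∈ Y, 0 ≤ ν y)
    (adj : ∀ f g, ∑ x ∈ X, μ x * g x * U f x = ∑ y ∈ Y, ν y * D g y * f y)
    (mean : ∀ f, ∑ y ∈ Y, ν y * f y = 0 → ∑ x ∈ X, μ x * U f x = 0)
    {l : ℝ} (hl : 0 ≤ l)
    (h : ∀ g, ∑ x ∈ X, μ x * g x = 0 →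
      ∑ x ∈ X, μ x * g x * U (D g) x ≤ l * ∑ x ∈ X, μ x * g x ^ 2)
    (f : α → ℝ) (hf : ∑ y ∈ Y, ν y * f y = 0) :
    ∑ y ∈ Y, ν y * f y * D (U f) y ≤ l * ∑ y ∈ Y, ν y * f y ^ 2 := by
  have h1 := h (U f) (mean f hf)
  have e1 := adj f (U f)
  have e2 := adj (D (U f)) (U f)
  set t := ∑ y ∈ Y, ν y * f y * D (U f) y with ht
  have e1' : ∑ x ∈ X, μ x * U f x ^ 2 = t := by
    rw [ht]
    calc _ = ∑ x ∈ X, μ x * U f x * U f x := sum_congr rfl fun x _ => by ring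
      _ = _ := e1
      _ = _ := sum_congr rfl fun x _ => by ring
  rw [e1', e2] at h1
  have hA : 0 ≤ ∑ y ∈ Y, ν y * f y ^ 2 :=
    sum_nonneg fun y hy => mul_nonneg (hν y hy) (sq_nonneg _)
  -- Cauchy–Schwarz for `⟨f, DUf⟩`
  have cs : t ^ 2 ≤ (∑ y ∈ Y, ν y * f y ^ 2) * ∑ y ∈ Y, ν y * D (U f) y * D (U f) y := by
    refine sum_sq_le_sum_mul_sum_of_sq_le_mul Y (fun y hy => ?_) (fun y hy => ?_) fun y hy => ?_
    · exact mul_nonneg (hν y hy) (sq_nonneg _)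
    · rw [mul_assoc]; exact mul_nonneg (hν y hy) (mul_self_nonneg _)
    · exact le_of_eq (by ring)
  by_contra! hlt
  have ht0 : 0 < t := lt_of_le_of_lt (mul_nonneg hl hA) hlt
  have h2 := mul_le_mul_of_nonneg_left h1 hA
  nlinarith [mul_lt_mul_of_pos_right hlt ht0]

lemma AdjPair.U_mean (P : AdjPair X Y μ ν U D) (f : α → ℝ) :
    ∑ x ∈ X, μ x * U f x = ∑ y ∈ Y, ν y * f y := by
  have h := P.adj f (fun _ => 1)
  simp only [mul_one] at h
  rw [h]
  exact sum_congr rfl fun y hy => by rw [P.D_one y hy, mul_one]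

lemma AdjPair.D_mean (P : AdjPair X Y μ ν U D) (g : α → ℝ) :
    ∑ y ∈ Y, ν y * D g y = ∑ x ∈ X, μ x * g x := by
  have h := P.adj (fun _ => 1) g
  simp only [mul_one] at h
  rw [← h]
  exact sum_congr rfl fun y hy => by rw [P.U_one y hy, mul_one]

lemma AdjPair.UD_eq (P : AdjPair X Y μ ν U D) (g : α → ℝ) :
    ∑ x ∈ X, μ x * g x * U (D g) x = ∑ y ∈ Y, ν y * D g y ^ 2 := by
  rw [P.adj]
  exact sum_congr rfl fun y _ => by ring

lemma AdjPair.DU_eq (P : AdjPair X Y μ ν U D) (f : α → ℝ) :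
    ∑ y ∈ Y, ν y * f y * D (U f) y = ∑ x ∈ X, μ x * U f x ^ 2 := by
  have h := P.adj f (U f)
  calc _ = ∑ y ∈ Y, ν y * D (U f) y * f y := sum_congr rfl fun y _ => by ring
    _ = _ := h.symm
    _ = _ := sum_congr rfl fun y _ => by ring

lemma AdjPair.UD_le (P : AdjPair X Y μ ν U D) (g : α → ℝ) :
    ∑ x ∈ X, μ x * g x * U (D g) x ≤ 1 * ∑ x ∈ X, μ x * g x ^ 2 := by
  rw [P.UD_eq, one_mul, ← P.D_mean]
  exact sum_le_sum fun y hy => mul_le_mul_of_nonneg_left (P.sq g y hy) (P.ν_nonneg y hy)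

/-- Both operators of an adjoint pair are contractions; here for `U`, on all functions. -/
lemma AdjPair.DU_le (P : AdjPair X Y μ ν U D) (f : α → ℝ) :
    ∑ y ∈ Y, ν y * f y * D (U f) y ≤ 1 * ∑ y ∈ Y, ν y * f y ^ 2 := by
  have hD := P.UD_le (U f)
  rw [P.UD_eq, ← P.DU_eq] at hD
  have : 0 ≤ ∑ y ∈ Y, ν y * (f y - D (U f) y) ^ 2 :=
    sum_nonneg fun y hy => mul_nonneg (P.ν_nonneg y hy) (sq_nonneg _)
  have e : ∑ y ∈ Y, ν y * (f y - D (U f) y) ^ 2 = ∑ y ∈ Y, ν y * f y ^ 2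
      - 2 * ∑ y ∈ Y, ν y * f y * D (U f) y + ∑ y ∈ Y, ν y * D (U f) y ^ 2 := by
    rw [mul_sum, ← sum_sub_distrib, ← sum_add_distrib]
    exact sum_congr rfl fun y _ => by ring
  linarith

end Abstract

lemma lamTwo_le {μ : Finset E → ℝ} {X : Finset (Finset E)} {P : (Finset E → ℝ) → Finset E → ℝ}
    (hμ : ∀ x ∈ X, 0 ≤ μ x) {l : ℝ} (hl : 0 ≤ l)
    (h : ∀ f, ∑ x ∈ X, μ x * f x = 0 → ∑ x ∈ X, μ x * f x * P f x ≤ l * ∑ x ∈ X, μ x * f x ^ 2) :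
    lamTwo μ X P ≤ l := by
  refine Real.sSup_le ?_ hl
  rintro r ⟨f, h0, h1, rfl⟩
  have : 0 ≤ ∑ x ∈ X, μ x * f x ^ 2 := sum_nonneg fun x hx => mul_nonneg (hμ x hx) (sq_nonneg _)
  rw [div_le_iff₀ (lt_of_le_of_ne this h1.symm)]
  exact h f h0

/-- The Rayleigh bound by `lamTwo`. The a priori bound `hB` makes the supremum a genuine one and
settles the functions of norm zero. -/
lemma rayleigh_le_lamTwo {μ : Finset E → ℝ} {X : Finset (Finset E)}
    {P : (Finset E → ℝ) → Finset E → ℝ}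
    (hμ : ∀ x ∈ X, 0 ≤ μ x) {B : ℝ}
    (hB : ∀ f, ∑ x ∈ X, μ x * f x * P f x ≤ B * ∑ x ∈ X, μ x * f x ^ 2)
    (f : Finset E → ℝ) (hf : ∑ x ∈ X, μ x * f x = 0) :
    ∑ x ∈ X, μ x * f x * P f x ≤ lamTwo μ X P * ∑ x ∈ X, μ x * f x ^ 2 := by
  have pos : ∀ f : Finset E → ℝ, 0 ≤ ∑ x ∈ X, μ x * f x ^ 2 := fun f =>
    sum_nonneg fun x hx => mul_nonneg (hμ x hx) (sq_nonneg _)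
  by_cases h : ∑ x ∈ X, μ x * f x ^ 2 = 0
  · have := hB f
    rw [h] at this ⊢
    simpa using this
  · rw [← div_le_iff₀ (lt_of_le_of_ne (pos f) (Ne.symm h))]
    refine le_csSup ⟨B, ?_⟩ ⟨f, hf, h, rfl⟩
    rintro r ⟨g, -, h1, rfl⟩
    rw [div_le_iff₀ (lt_of_le_of_ne (pos g) h1.symm)]
    exact hB g

lemma lamTwo_nonneg {μ : Finset E → ℝ} {X : Finset (Finset E)}
    {P : (Finset E → ℝ) → Finset E → ℝ} (hμ : ∀ x ∈ X, 0 ≤ μ x)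
    (h : ∀ f, 0 ≤ ∑ x ∈ X, μ x * f x * P f x) : 0 ≤ lamTwo μ X P := by
  refine Real.sSup_nonneg ?_
  rintro r ⟨f, -, -, rfl⟩
  exact div_nonneg (h f) (sum_nonneg fun x hx => mul_nonneg (hμ x hx) (sq_nonneg _))

/-- The two compositions of an adjoint pair have the same second eigenvalue (the degenerate
case where all mean zero functions vanish is covered, the supremum of `∅` being `0`). -/
lemma AdjPair.lamTwo_eq {X Y : Finset (Finset E)} {μ ν : Finset E → ℝ}
    {U D : (Finset E → ℝ) → Finset E → ℝ} (P : AdjPair X Y μ ν U D) :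
    lamTwo ν Y (fun f => D (U f)) = lamTwo μ X (fun g => U (D g)) := by
  have n1 : 0 ≤ lamTwo ν Y (fun f => D (U f)) := lamTwo_nonneg P.ν_nonneg fun f => by
    rw [P.DU_eq]; exact sum_nonneg fun x hx => mul_nonneg (P.μ_nonneg x hx) (sq_nonneg _)
  have n2 : 0 ≤ lamTwo μ X (fun g => U (D g)) := lamTwo_nonneg P.μ_nonneg fun f => by
    rw [P.UD_eq]; exact sum_nonneg fun x hx => mul_nonneg (P.ν_nonneg x hx) (sq_nonneg _)
  apply le_antisymm
  · refine lamTwo_le P.ν_nonneg n2 (transfer_bound P.ν_nonneg P.adj (fun f hf => ?_) n2 ?_)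
    · rw [P.U_mean, hf]
    · exact rayleigh_le_lamTwo P.μ_nonneg P.UD_le
  · refine lamTwo_le P.μ_nonneg n1 (transfer_bound (X := Y) (μ := ν) P.μ_nonneg (fun f g => ?_)
      (fun f hf => ?_) n1 ?_)
    · calc _ = ∑ y ∈ Y, ν y * D f y * g y := sum_congr rfl fun y _ => by ring
        _ = _ := (P.adj g f).symm
        _ = _ := sum_congr rfl fun y _ => by ring
    · rw [P.D_mean, hf]
    · exact rayleigh_le_lamTwo P.ν_nonneg P.DU_le

/-! ### Weights of faces and the operators of the complex -/

/-- The faces of cardinality `m` containing `S`. -/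
def above (C : Finset (Finset E)) (S : Finset E) (m : ℕ) : Finset (Finset E) :=
  (faces C m).filter fun T => S ⊆ T

/-- The down operator relative to `S`: average of `φ` over the removal of one of the `n` elements
of `T ∖ S`. For `S = ∅` it is `downOp n`; for `n = 2` it is the down operator on the edges of the
link of `S`, with `T` standing for the edge `T ∖ S`. -/
def relDown (n : ℕ) (S : Finset E) (φ : Finset E → ℝ) (T : Finset E) : ℝ :=
  (1 / (n : ℝ)) * ∑ i ∈ T \ S, φ (T.erase i)

variable {C : Finset (Finset E)} {d : ℕ} {pid : Finset E → ℝ}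

lemma mem_faces {S : Finset E} {m : ℕ} : S ∈ faces C m ↔ S ∈ C ∧ S.card = m := by
  simp [faces]

lemma mem_above {S T : Finset E} {m : ℕ} : T ∈ above C S m ↔ (T ∈ C ∧ T.card = m) ∧ S ⊆ T := by
  simp [above, faces]

lemma above_empty (m : ℕ) : above C ∅ m = faces C m := by
  simp [above]

lemma relDown_empty (n : ℕ) : relDown n (∅ : Finset E) = downOp n := by
  funext φ T
  simp [relDown, downOp]

lemma wgt_pos (hC : IsPureComplex C d) (hp : IsTopDist C d pid) {S : Finset E} (hS : S ∈ C) :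
    0 < wgt C d pid S := by
  obtain ⟨T, hT, hST, hc⟩ := hC.2.2 S hS
  refine sum_pos (fun T hT => hp.1 T (mem_filter.1 hT).1) ⟨T, ?_⟩
  simp [mem_faces, hT, hST, hc]

/-- A face of cardinality `d` above `R` contains `d - |R|` faces of the next level above `R`. -/
lemma sum_wgt_above (hC : IsPureComplex C d) {R : Finset E} {m : ℕ} (hR : R ∈ faces C m) :
    ∑ T ∈ above C R (m + 1), wgt C d pid T = ((d : ℝ) - m) * wgt C d pid R := by
  obtain ⟨hRC, hRm⟩ := mem_faces.1 hR
  have key : ∀ F ∈ (faces C d).filter (fun F => R ⊆ F),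
      (above C R (m + 1)).filter (fun T => T ⊆ F) = (F \ R).image (fun i => insert i R) := by
    intro F hF
    obtain ⟨hF1, hRF⟩ := mem_filter.1 hF
    obtain ⟨hFC, hFd⟩ := mem_faces.1 hF1
    ext T
    simp only [mem_filter, mem_above, mem_image, mem_sdiff]
    constructor
    · rintro ⟨⟨⟨hTC, hTm⟩, hRT⟩, hTF⟩
      have hc : (T \ R).card = 1 := by rw [card_sdiff_of_subset hRT]; omega
      obtain ⟨i, hi⟩ := card_eq_one.1 hc
      have hiT : i ∈ T \ R := by simp [hi]
      refine ⟨i, ⟨hTF (mem_sdiff.1 hiT).1, (mem_sdiff.1 hiT).2⟩, ?_⟩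
      rw [insert_eq, ← hi, sdiff_union_of_subset hRT]
    · rintro ⟨i, ⟨hiF, hiR⟩, rfl⟩
      have hsub : insert i R ⊆ F := insert_subset hiF hRF
      exact ⟨⟨⟨hC.2.1 F hFC _ hsub, by rw [card_insert_of_notMem hiR, hRm]⟩,
        subset_insert _ _⟩, hsub⟩
  have hcard : ∀ F ∈ (faces C d).filter (fun F => R ⊆ F),
      (((above C R (m + 1)).filter (fun T => T ⊆ F)).card : ℝ) = (d : ℝ) - m := by
    intro F hF
    have h := key F hF
    obtain ⟨hF1, hRF⟩ := mem_filter.1 hF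
    obtain ⟨hFC, hFd⟩ := mem_faces.1 hF1
    rw [h, card_image_of_injOn, card_sdiff_of_subset hRF, Nat.cast_sub (card_le_card hRF), hFd, hRm]
    intro i hi i' hi' he
    simp only [coe_sdiff, Set.mem_sdiff, mem_coe] at hi hi'
    have : i ∈ insert i' R := by rw [← show insert i R = insert i' R from he]; simp
    simpa [hi.2] using this
  unfold wgt
  rw [mul_sum]
  calc _ = ∑ F ∈ (faces C d).filter (fun F => R ⊆ F),
        ∑ _T ∈ (above C R (m + 1)).filter (fun T => T ⊆ F), pid F := by
        refine sum_comm' fun T F => ?_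
        simp only [mem_filter, mem_above]
        constructor
        · rintro ⟨⟨h1, h2⟩, h3, h4⟩
          exact ⟨⟨⟨h1, h2⟩, h4⟩, h3, h2.trans h4⟩
        · rintro ⟨⟨⟨h1, h2⟩, h4⟩, h3, -⟩
          exact ⟨⟨h1, h2⟩, h3, h4⟩
    _ = _ := sum_congr rfl fun F hF => by rw [sum_const, nsmul_eq_mul, hcard F hF]

/-- The up operator only depends on the weights up to a constant factor. -/
lemma upWith_eq {ν w : Finset E → ℝ} {dom : Finset (Finset E)} {κ : ℝ} (hκ : κ ≠ 0)
    (h : ∀ T ∈ dom, ν T = κ * w T) (f : Finset E → ℝ) (R : Finset E) :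
    upWith ν dom f R = (∑ T ∈ dom.filter (fun T => R ⊆ T), w T * f T) /
      ∑ T ∈ dom.filter (fun T => R ⊆ T), w T := by
  have e : ∑ T ∈ dom.filter (fun T => R ⊆ T), ν T
      = κ * ∑ T ∈ dom.filter (fun T => R ⊆ T), w T := by
    rw [mul_sum]
    exact sum_congr rfl fun T hT => h T (mem_filter.1 hT).1
  unfold upWith
  rw [e, sum_div]
  refine sum_congr rfl fun T hT => ?_
  rw [h T (mem_filter.1 hT).1, mul_div_mul_left _ _ hκ]
  ring

lemma exists_face (hC : IsPureComplex C d) {m : ℕ} (hm : m ≤ d) : ∃ S, S ∈ faces C m := by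
  obtain ⟨S, hS⟩ := hC.1
  obtain ⟨T, hT, -, hc⟩ := hC.2.2 S hS
  obtain ⟨R, hR, hRc⟩ := exists_subset_card_eq (hc ▸ hm : m ≤ T.card)
  exact ⟨R, mem_faces.2 ⟨hC.2.1 T hT R hR, hRc⟩⟩

lemma total_pos (hC : IsPureComplex C d) (hp : IsTopDist C d pid) {m : ℕ} (hm : m ≤ d) :
    0 < ∑ T ∈ faces C m, wgt C d pid T :=
  sum_pos (fun _ hT => wgt_pos hC hp (mem_faces.1 hT).1) (exists_face hC hm)

lemma upOp_eq (hC : IsPureComplex C d) (hp : IsTopDist C d pid) {m : ℕ} (hm : m < d)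
    {R : Finset E} (hR : R ∈ faces C m) (f : Finset E → ℝ) :
    upOp C d pid m f R = (∑ T ∈ above C R (m + 1), wgt C d pid T * f T) /
      (((d : ℝ) - m) * wgt C d pid R) := by
  rw [← sum_wgt_above hC hR]
  refine upWith_eq (κ := (∑ T ∈ faces C (m + 1), wgt C d pid T)⁻¹)
    (inv_ne_zero (total_pos hC hp hm).ne') (fun T hT => ?_) f R
  rw [piLev, if_pos hT]
  ring

/-- The faces of level `m` between `S` and a face `T` of level `m + 1` are the `T ∖ {i}` with
`i ∈ T ∖ S`. -/
lemma sum_between (hC : IsPureComplex C d) {S T : Finset E} {m : ℕ} (hT : T ∈ above C S (m + 1))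
    (g : Finset E → ℝ) :
    ∑ R ∈ (above C S m).filter (fun R => R ⊆ T), g R = ∑ i ∈ T \ S, g (T.erase i) := by
  obtain ⟨⟨hTC, hTm⟩, hST⟩ := mem_above.1 hT
  have inj : Set.InjOn (fun i => T.erase i) ((T \ S : Finset E) : Set E) := by
    intro i hi i' hi' he
    simp only [coe_sdiff, Set.mem_sdiff, mem_coe] at hi hi'
    by_contra hne
    have : i ∈ T.erase i' := mem_erase.2 ⟨hne, hi.1⟩
    rw [← show T.erase i = T.erase i' from he] at this
    simp at this
  have : (above C S m).filter (fun R => R ⊆ T) = (T \ S).image (fun i => T.erase i) := by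
    ext R
    simp only [mem_filter, mem_above, mem_image, mem_sdiff]
    constructor
    · rintro ⟨⟨⟨hRC, hRm⟩, hSR⟩, hRT⟩
      have hc : (T \ R).card = 1 := by rw [card_sdiff_of_subset hRT]; omega
      obtain ⟨i, hi⟩ := card_eq_one.1 hc
      have hiT : i ∈ T \ R := by simp [hi]
      refine ⟨i, ⟨(mem_sdiff.1 hiT).1, fun h => (mem_sdiff.1 hiT).2 (hSR h)⟩, ?_⟩
      rw [erase_eq, ← hi, Finset.sdiff_sdiff_eq_self hRT]
    · rintro ⟨i, ⟨hiT, hiS⟩, rfl⟩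
      refine ⟨⟨⟨hC.2.1 T hTC _ (erase_subset _ _), by rw [card_erase_of_mem hiT]; omega⟩,
        fun x hx => mem_erase.2 ⟨?_, hST hx⟩⟩, erase_subset _ _⟩
      rintro rfl
      exact hiS hx
  rw [this, sum_image inj]

/-- The up and down operators between consecutive levels above a face `S` form an adjoint pair. -/
lemma adjPair_above (hC : IsPureComplex C d) (hp : IsTopDist C d pid) {S : Finset E} {m n : ℕ}
    (hm : m < d) (hn : S.card + n = m + 1) (hn0 : 0 < n) {c : ℝ} (hc : 0 ≤ c) :
    AdjPair (above C S m) (above C S (m + 1)) (fun R => c * ((d : ℝ) - m) * wgt C d pid R)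
      (fun T => c * n * wgt C d pid T) (upOp C d pid m) (relDown n S) := by
  have hdm : (0 : ℝ) < (d : ℝ) - m := sub_pos.2 (by exact_mod_cast hm)
  have hnR : (0 : ℝ) < n := by exact_mod_cast hn0
  have hcard : ∀ T ∈ above C S (m + 1), (T \ S).card = n := by
    intro T hT
    obtain ⟨⟨hTC, hTm⟩, hST⟩ := mem_above.1 hT
    rw [card_sdiff_of_subset hST]; omega
  have wpos : ∀ {k : ℕ}, ∀ R ∈ above C S k, 0 < wgt C d pid R := fun R hR =>
    wgt_pos hC hp (mem_above.1 hR).1.1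
  refine ⟨fun R hR => ?_, fun T hT => ?_, fun f g => ?_, fun R hR => ?_, fun T hT => ?_,
    fun g T hT => ?_⟩
  · exact mul_nonneg (mul_nonneg hc hdm.le) (wpos R hR).le
  · exact mul_nonneg (mul_nonneg hc hnR.le) (wpos T hT).le
  · calc _ = ∑ R ∈ above C S m, ∑ T ∈ above C R (m + 1), c * wgt C d pid T * f T * g R := by
          refine sum_congr rfl fun R hR => ?_
          rw [upOp_eq hC hp hm (mem_faces.2 (mem_above.1 hR).1)]
          have := (wpos R hR).ne'
          have := hdm.ne'
          have e : ∑ T ∈ above C R (m + 1), c * wgt C d pid T * f T * g R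
              = c * g R * ∑ T ∈ above C R (m + 1), wgt C d pid T * f T := by
            rw [mul_sum]
            exact sum_congr rfl fun T _ => by ring
          rw [e]
          field_simp
      _ = ∑ T ∈ above C S (m + 1), ∑ R ∈ (above C S m).filter (fun R => R ⊆ T),
            c * wgt C d pid T * f T * g R := by
          refine sum_comm' fun R T => ?_
          simp only [mem_filter, mem_above]
          constructor
          · rintro ⟨⟨h1, h2⟩, h3, h4⟩
            exact ⟨⟨⟨h1, h2⟩, h4⟩, h3, h2.trans h4⟩
          · rintro ⟨⟨⟨h1, h2⟩, h4⟩, h3, -⟩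
            exact ⟨⟨h1, h2⟩, h3, h4⟩
      _ = _ := by
          refine sum_congr rfl fun T hT => ?_
          rw [← mul_sum, sum_between hC hT, relDown]
          have := hnR.ne'
          field_simp
  · rw [upOp_eq hC hp hm (mem_faces.2 (mem_above.1 hR).1)]
    simp only [mul_one]
    rw [sum_wgt_above hC (mem_faces.2 (mem_above.1 hR).1)]
    exact div_self (mul_pos hdm (wpos R hR)).ne'
  · simp only [relDown, sum_const, hcard T hT, nsmul_eq_mul, mul_one]
    exact one_div_mul_cancel hnR.ne'
  · have := sq_sum_le_card_mul_sum_sq (s := T \ S) (f := fun i => g (T.erase i))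
    rw [hcard T hT] at this
    simp only [relDown]
    rw [mul_pow, one_div, inv_pow, sq (n : ℝ), mul_inv, mul_assoc]
    refine mul_le_mul_of_nonneg_left ?_ (inv_pos.2 hnR).le
    rwa [inv_mul_le_iff₀ hnR]

/-! ### Links -/

lemma mem_linkFaces {S T : Finset E} {k : ℕ} :
    T ∈ linkFaces C S k ↔ S ∩ T = ∅ ∧ S ∪ T ∈ C ∧ T.card = k := by
  simp [linkFaces]

/-- The map `T ↦ S ∪ T` identifies the faces of the link of `S` that contain `T₀` with the faces
of the complex that contain `S ∪ T₀`. -/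
lemma sum_link {S T₀ : Finset E} (h₀ : S ∩ T₀ = ∅) (k : ℕ) (F : Finset E → ℝ) :
    ∑ T ∈ (linkFaces C S k).filter (fun T => T₀ ⊆ T), F (S ∪ T)
      = ∑ R ∈ above C (S ∪ T₀) (S.card + k), F R := by
  refine sum_nbij' (fun T => S ∪ T) (fun R => R \ S) ?_ ?_ ?_ ?_ (fun _ _ => rfl)
  · intro T hT
    obtain ⟨h1, h2⟩ := mem_filter.1 hT
    obtain ⟨h3, h4, h5⟩ := mem_linkFaces.1 h1
    refine mem_above.2 ⟨⟨h4, ?_⟩, union_subset_union_right h2⟩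
    rw [card_union_of_disjoint (disjoint_iff_inter_eq_empty.2 h3), h5]
  · intro R hR
    obtain ⟨⟨h1, h2⟩, h3⟩ := mem_above.1 hR
    have hSR : S ⊆ R := subset_union_left.trans h3
    refine mem_filter.2 ⟨mem_linkFaces.2 ⟨inter_sdiff_self _ _, ?_, ?_⟩, ?_⟩
    · rwa [union_sdiff_of_subset hSR]
    · rw [card_sdiff_of_subset hSR]; omega
    · exact subset_sdiff.2 ⟨subset_union_right.trans h3,
        (disjoint_iff_inter_eq_empty.2 h₀).symm⟩
  · intro T hT
    obtain ⟨h3, -, -⟩ := mem_linkFaces.1 (mem_filter.1 hT).1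
    exact union_sdiff_cancel_left (disjoint_iff_inter_eq_empty.2 h3)
  · intro R hR
    exact union_sdiff_of_subset (subset_union_left.trans (mem_above.1 hR).2)

lemma sum_link' {S : Finset E} (k : ℕ) (F : Finset E → ℝ) :
    ∑ T ∈ linkFaces C S k, F (S ∪ T) = ∑ R ∈ above C S (S.card + k), F R := by
  simpa using sum_link (C := C) (S := S) (T₀ := ∅) (by simp) k F

lemma linkPi_eq (hC : IsPureComplex C d) (hp : IsTopDist C d pid) {S T : Finset E} {k : ℕ}
    (hk : S.card + k ≤ d) (hT : T ∈ linkFaces C S k) :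
    linkPi C d pid S k T
      = (∑ R ∈ above C S (S.card + k), wgt C d pid R)⁻¹ * wgt C d pid (S ∪ T) := by
  have hZ := (total_pos hC hp hk).ne'
  have e : ∀ R ∈ above C S (S.card + k), piLev C d pid (S.card + k) R
      = wgt C d pid R / ∑ T ∈ faces C (S.card + k), wgt C d pid T := fun R hR => by
    rw [piLev, if_pos (mem_filter.1 hR).1]
  have hST : S ∪ T ∈ above C S (S.card + k) := by
    obtain ⟨h3, h4, h5⟩ := mem_linkFaces.1 hT
    refine mem_above.2 ⟨⟨h4, ?_⟩, subset_union_left⟩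
    rw [card_union_of_disjoint (disjoint_iff_inter_eq_empty.2 h3), h5]
  rw [linkPi, if_pos hT, sum_link' k (piLev C d pid (S.card + k)), e _ hST, sum_congr rfl e,
    ← sum_div, div_div_div_cancel_right₀ hZ, div_eq_inv_mul]

/-- The adjoint pair between the vertices and the edges of the link of `S`, both read as faces of
the complex containing `S`; the constant normalises both weights to total mass one. -/
lemma adjPair_link (hC : IsPureComplex C d) (hp : IsTopDist C d pid) {S : Finset E} {j : ℕ}
    (hS : S ∈ faces C j) (hj : j + 2 ≤ d) :
    AdjPair (above C S (j + 1)) (above C S (j + 2))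
      (fun R => (((d : ℝ) - j) * wgt C d pid S)⁻¹ * wgt C d pid R)
      (fun T => (((d : ℝ) - j) * ((d : ℝ) - (j + 1 : ℕ)) * wgt C d pid S)⁻¹ * 2 * wgt C d pid T)
      (upOp C d pid (j + 1)) (relDown 2 S) := by
  obtain ⟨hSC, hSj⟩ := mem_faces.1 hS
  have hw := wgt_pos hC hp hSC
  have h1 : (0 : ℝ) < (d : ℝ) - j := sub_pos.2 (by exact_mod_cast (by omega : j < d))
  have h2 : (0 : ℝ) < (d : ℝ) - (j + 1 : ℕ) :=
    sub_pos.2 (by exact_mod_cast (by omega : j + 1 < d))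
  have h := adjPair_above (S := S) (m := j + 1) (n := 2) hC hp (by omega) (by omega) (by omega)
    (c := (((d : ℝ) - j) * ((d : ℝ) - (j + 1 : ℕ)) * wgt C d pid S)⁻¹) (by positivity)
  convert h using 2
  · congr 1
    field_simp
  · norm_num

/-- The local walk on `f`, written on the faces containing `S`. -/
lemma localWalk_sum (hC : IsPureComplex C d) (hp : IsTopDist C d pid) {S : Finset E} {j : ℕ}
    (hS : S ∈ faces C j) (hj : j + 2 ≤ d) {f φ : Finset E → ℝ}
    (hf : ∀ T ∈ linkFaces C S 1, f T = φ (S ∪ T)) {T : Finset E} (hT : T ∈ linkFaces C S 1) :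
    localWalk C d pid S f T = 2 * upOp C d pid (j + 1) (relDown 2 S φ) (S ∪ T) - φ (S ∪ T) := by
  obtain ⟨hSC, hSj⟩ := mem_faces.1 hS
  obtain ⟨h3, h4, h5⟩ := mem_linkFaces.1 hT
  have hSTf : S ∪ T ∈ faces C (j + 1) := mem_faces.2
    ⟨h4, by rw [card_union_of_disjoint (disjoint_iff_inter_eq_empty.2 h3), h5, hSj]⟩
  have hD : ∀ T' ∈ linkFaces C S 2, downOp 2 f T' = relDown 2 S φ (S ∪ T') := by
    intro T' hT'
    obtain ⟨g3, g4, g5⟩ := mem_linkFaces.1 hT'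
    have hdis := disjoint_iff_inter_eq_empty.2 g3
    rw [downOp, relDown, union_sdiff_cancel_left hdis]
    congr 1
    refine sum_congr rfl fun i hi => ?_
    have hiS : i ∉ S := fun h => disjoint_left.1 hdis h hi
    have e : S ∪ T'.erase i = (S ∪ T').erase i := by
      rw [erase_union_distrib, erase_eq_of_notMem hiS]
    rw [hf _ (mem_linkFaces.2 ⟨?_, ?_, ?_⟩), e]
    · exact disjoint_iff_inter_eq_empty.1 (hdis.mono_right (erase_subset _ _))
    · rw [e]; exact hC.2.1 _ g4 _ (erase_subset _ _)
    · rw [card_erase_of_mem hi, g5]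
  have hne : (∑ R ∈ above C S (S.card + 2), wgt C d pid R)⁻¹ ≠ 0 := by
    refine inv_ne_zero (sum_pos (fun R hR => wgt_pos hC hp (mem_above.1 hR).1.1) ?_).ne'
    obtain ⟨F, hF, hSF, hFd⟩ := hC.2.2 S hSC
    obtain ⟨R, hSR, hRF, hR⟩ := exists_subsuperset_card_eq hSF
      (n := S.card + 2) (by omega) (by omega)
    exact ⟨R, mem_above.2 ⟨⟨hC.2.1 F hF R hRF, hR⟩, hSR⟩⟩
  rw [localWalk, hf T hT, linkUpDown, linkUp,
    upWith_eq (w := fun T => wgt C d pid (S ∪ T)) hne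
      (fun T' hT' => linkPi_eq hC hp (by omega) hT'),
    sum_link h3 2 (wgt C d pid), upOp_eq hC hp (by omega) hSTf, ← sum_wgt_above hC hSTf]
  have e : ∑ T' ∈ (linkFaces C S 2).filter (fun T' => T ⊆ T'),
        wgt C d pid (S ∪ T') * downOp (1 + 1) f T'
      = ∑ R ∈ above C (S ∪ T) (S.card + 2), wgt C d pid R * relDown 2 S φ R := by
    rw [← sum_link h3 2 (fun R => wgt C d pid R * relDown 2 S φ R)]
    exact sum_congr rfl fun T' hT' => by rw [← hD T' (mem_filter.1 hT').1]
  rw [e, hSj]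

/-- The expansion hypothesis at `S`, as a bound on the two-step walk on the faces above `S`. -/
lemma local_bound (hC : IsPureComplex C d) (hp : IsTopDist C d pid) {S : Finset E} {j : ℕ}
    (hS : S ∈ faces C j) (hj : j + 2 ≤ d) {b : ℝ}
    (hb : lamTwo (linkPi C d pid S 1) (linkFaces C S 1) (localWalk C d pid S) ≤ b)
    (φ : Finset E → ℝ) (hφ : upOp C d pid j φ S = 0) :
    ∑ R ∈ above C S (j + 1), (((d : ℝ) - j) * wgt C d pid S)⁻¹ * wgt C d pid R * φ R *
        upOp C d pid (j + 1) (relDown 2 S φ) R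
      ≤ (1 + b) / 2 * ∑ R ∈ above C S (j + 1),
        (((d : ℝ) - j) * wgt C d pid S)⁻¹ * wgt C d pid R * φ R ^ 2 := by
  obtain ⟨hSC, hSj⟩ := mem_faces.1 hS
  have P := adjPair_link hC hp hS hj
  have hpi : ∀ T ∈ linkFaces C S 1, linkPi C d pid S 1 T
      = (((d : ℝ) - j) * wgt C d pid S)⁻¹ * wgt C d pid (S ∪ T) := by
    intro T hT
    rw [linkPi_eq hC hp (by omega) hT, hSj, sum_wgt_above hC hS]
  set μ : Finset E → ℝ := fun R => (((d : ℝ) - j) * wgt C d pid S)⁻¹ * wgt C d pid R with hμ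
  have tr : ∀ f φ : Finset E → ℝ, (∀ T ∈ linkFaces C S 1, f T = φ (S ∪ T)) →
      ∑ T ∈ linkFaces C S 1, linkPi C d pid S 1 T * f T
        = ∑ R ∈ above C S (j + 1), μ R * φ R := by
    intro f φ hf
    rw [← hSj, ← sum_link' 1]
    exact sum_congr rfl fun T hT => by rw [hpi T hT, hf T hT]
  have trW : ∀ f φ : Finset E → ℝ, (∀ T ∈ linkFaces C S 1, f T = φ (S ∪ T)) →
      ∑ T ∈ linkFaces C S 1, linkPi C d pid S 1 T * f T * localWalk C d pid S f T
        = 2 * (∑ R ∈ above C S (j + 1), μ R * φ R * upOp C d pid (j + 1) (relDown 2 S φ) R)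
          - ∑ R ∈ above C S (j + 1), μ R * φ R ^ 2 := by
    intro f φ hf
    have := tr (fun T => f T * localWalk C d pid S f T)
      (fun R => φ R * (2 * upOp C d pid (j + 1) (relDown 2 S φ) R - φ R)) (fun T hT => by
        rw [localWalk_sum hC hp hS hj hf hT, hf T hT])
    rw [mul_sum, ← sum_sub_distrib]
    simp only [← mul_assoc] at this
    rw [this]
    exact sum_congr rfl fun R _ => by ring
  have trS : ∀ f φ : Finset E → ℝ, (∀ T ∈ linkFaces C S 1, f T = φ (S ∪ T)) →
      ∑ T ∈ linkFaces C S 1, linkPi C d pid S 1 T * f T ^ 2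
        = ∑ R ∈ above C S (j + 1), μ R * φ R ^ 2 := fun f φ hf =>
    tr (fun T => f T ^ 2) (fun R => φ R ^ 2) (fun T hT => by rw [hf T hT])
  have nn : ∀ T ∈ linkFaces C S 1, 0 ≤ linkPi C d pid S 1 T := by
    intro T hT
    obtain ⟨h3, h4, h5⟩ := mem_linkFaces.1 hT
    rw [hpi T hT]
    refine P.μ_nonneg (S ∪ T) (mem_above.2 ⟨⟨h4, ?_⟩, subset_union_left⟩)
    rw [card_union_of_disjoint (disjoint_iff_inter_eq_empty.2 h3), h5, hSj]
  have hB : ∀ f, ∑ T ∈ linkFaces C S 1, linkPi C d pid S 1 T * f T * localWalk C d pid S f T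
      ≤ 1 * ∑ T ∈ linkFaces C S 1, linkPi C d pid S 1 T * f T ^ 2 := by
    intro f
    have hf : ∀ T ∈ linkFaces C S 1, f T = (fun R => f (R \ S)) (S ∪ T) := by
      intro T hT
      change f T = f ((S ∪ T) \ S)
      rw [union_sdiff_cancel_left (disjoint_iff_inter_eq_empty.2 (mem_linkFaces.1 hT).1)]
    rw [trW f (fun R => f (R \ S)) hf, trS f (fun R => f (R \ S)) hf]
    linarith [P.UD_le (fun R => f (R \ S))]
  have hf : ∀ T ∈ linkFaces C S 1, (fun T => φ (S ∪ T)) T = φ (S ∪ T) := fun _ _ => rfl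
  have key := rayleigh_le_lamTwo nn hB (fun T => φ (S ∪ T)) (by
    rw [tr _ φ hf]
    rw [upOp_eq hC hp (by omega) hS, div_eq_inv_mul, mul_sum] at hφ
    rw [← hφ]
    exact sum_congr rfl fun R _ => by rw [hμ]; ring)
  rw [trW _ φ hf, trS _ φ hf] at key
  have pos : 0 ≤ ∑ R ∈ above C S (j + 1), μ R * φ R ^ 2 :=
    sum_nonneg fun R hR => mul_nonneg (P.μ_nonneg R hR) (sq_nonneg _)
  have := mul_le_mul_of_nonneg_right hb pos
  linarith

lemma upOp_eq_sum (hC : IsPureComplex C d) (hp : IsTopDist C d pid) {j : ℕ} (hj : j < d)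
    {S : Finset E} (hS : S ∈ faces C j) (φ : Finset E → ℝ) :
    upOp C d pid j φ S
      = ∑ R ∈ above C S (j + 1), (((d : ℝ) - j) * wgt C d pid S)⁻¹ * wgt C d pid R * φ R := by
  rw [upOp_eq hC hp hj hS, div_eq_inv_mul, mul_sum]
  exact sum_congr rfl fun R _ => by ring

lemma sum_link_weight (hC : IsPureComplex C d) (hp : IsTopDist C d pid) {j : ℕ} (hj : j < d)
    {S : Finset E} (hS : S ∈ faces C j) :
    ∑ R ∈ above C S (j + 1), (((d : ℝ) - j) * wgt C d pid S)⁻¹ * wgt C d pid R = 1 := by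
  rw [← mul_sum, sum_wgt_above hC hS, inv_mul_cancel₀]
  have h1 : (0 : ℝ) < (d : ℝ) - j := sub_pos.2 (by exact_mod_cast hj)
  exact (mul_pos h1 (wgt_pos hC hp (mem_faces.1 hS).1)).ne'

/-- The local expansion constants are at least `-1`, and larger than `-1` when the link has
dimension at least three. The test function is the centred indicator of a vertex `x` of the link:
another vertex shows that it is not zero, and, in dimension three, on an edge avoiding `x` its
average is not zero either. -/
lemma local_const_pos (hC : IsPureComplex C d) (hp : IsTopDist C d pid) {S : Finset E} {j : ℕ}
    (hS : S ∈ faces C j) (hj : j + 2 ≤ d) {b : ℝ}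
    (hb : lamTwo (linkPi C d pid S 1) (linkFaces C S 1) (localWalk C d pid S) ≤ b) :
    0 ≤ (1 + b) / 2 ∧ (j + 3 ≤ d → 0 < (1 + b) / 2) := by
  obtain ⟨hSC, hSj⟩ := mem_faces.1 hS
  have P := adjPair_link hC hp hS hj
  have hw := wgt_pos hC hp hSC
  have h1 : (0 : ℝ) < (d : ℝ) - j := sub_pos.2 (by exact_mod_cast (by omega : j < d))
  have h2 : (0 : ℝ) < (d : ℝ) - (j + 1 : ℕ) :=
    sub_pos.2 (by exact_mod_cast (by omega : j + 1 < d))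
  obtain ⟨F, hF, hSF, hFd⟩ := hC.2.2 S hSC
  have hne : (F \ S).Nonempty := by
    rw [← card_pos, card_sdiff_of_subset hSF]; omega
  obtain ⟨x, hx⟩ := hne
  obtain ⟨hxF, hxS⟩ := mem_sdiff.1 hx
  have hsub : S ⊆ F.erase x := fun y hy => mem_erase.2 ⟨fun h => hxS (h ▸ hy), hSF hy⟩
  have hcard : (F.erase x).card = d - 1 := by rw [card_erase_of_mem hxF, hFd]
  have hR₁ : insert x S ∈ above C S (j + 1) := mem_above.2
    ⟨⟨hC.2.1 F hF _ (insert_subset hxF hSF), by rw [card_insert_of_notMem hxS, hSj]⟩,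
      subset_insert _ _⟩
  set c : ℝ := (((d : ℝ) - j) * wgt C d pid S)⁻¹ * wgt C d pid (insert x S) with hc
  have wpos : ∀ {k : ℕ}, ∀ R ∈ above C S k, 0 < wgt C d pid R := fun R hR =>
    wgt_pos hC hp (mem_above.1 hR).1.1
  have hc0 : 0 < c := mul_pos (inv_pos.2 (mul_pos h1 hw)) (wpos _ hR₁)
  set φ : Finset E → ℝ := fun R => (if R = insert x S then 1 else 0) - c with hφ
  have hmean : upOp C d pid j φ S = 0 := by
    rw [upOp_eq_sum hC hp (by omega) hS]
    simp only [hφ, mul_sub, sum_sub_distrib, mul_ite, mul_one, mul_zero]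
    rw [sum_ite_eq' , if_pos hR₁, ← sum_mul, sum_link_weight hC hp (by omega) hS, hc]
    ring
  have key := local_bound hC hp hS hj hb φ hmean
  rw [P.UD_eq] at key
  have hpos : 0 < ∑ R ∈ above C S (j + 1),
      (((d : ℝ) - j) * wgt C d pid S)⁻¹ * wgt C d pid R * φ R ^ 2 := by
    obtain ⟨R₂, hSR, hRF, hR⟩ := exists_subsuperset_card_eq hsub
      (n := j + 1) (by omega) (by omega)
    have hR₂ : R₂ ∈ above C S (j + 1) :=
      mem_above.2 ⟨⟨hC.2.1 F hF _ (hRF.trans (erase_subset _ _)), hR⟩, hSR⟩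
    refine sum_pos' (fun R hR => mul_nonneg (P.μ_nonneg R hR) (sq_nonneg _)) ⟨R₂, hR₂, ?_⟩
    have hne : R₂ ≠ insert x S := by
      rintro rfl
      exact (mem_erase.1 (hRF (mem_insert_self x S))).1 rfl
    have : φ R₂ = -c := by simp [hφ, hne]
    rw [this]
    have := wpos _ hR₂
    have := inv_pos.2 (mul_pos h1 hw)
    have : 0 < (-c) ^ 2 := by rw [neg_sq]; positivity
    positivity
  constructor
  · by_contra! hlt
    refine absurd (key.trans_lt (mul_neg_of_neg_of_pos hlt hpos)) (not_lt.2 ?_)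
    exact sum_nonneg fun T hT => mul_nonneg (P.ν_nonneg T hT) (sq_nonneg (relDown 2 S φ T))
  · intro hj3
    refine pos_of_mul_pos_left (lt_of_lt_of_le ?_ key) hpos.le
    obtain ⟨T, hST, hTF, hT⟩ := exists_subsuperset_card_eq hsub
      (n := j + 2) (by omega) (by omega)
    have hTa : T ∈ above C S (j + 2) :=
      mem_above.2 ⟨⟨hC.2.1 F hF _ (hTF.trans (erase_subset _ _)), hT⟩, hST⟩
    refine sum_pos' (fun R hR => mul_nonneg (P.ν_nonneg R hR) (sq_nonneg _)) ⟨T, hTa, ?_⟩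
    have hxT : x ∉ T := fun h => (mem_erase.1 (hTF h)).1 rfl
    have hD : relDown 2 S φ T = -c := by
      have e : ∀ i ∈ T \ S, φ (T.erase i) = -c := by
        intro i _
        have : T.erase i ≠ insert x S := fun h =>
          hxT (erase_subset i T (h ▸ mem_insert_self x S))
        simp [hφ, this]
      rw [relDown, sum_congr rfl e, sum_const, card_sdiff_of_subset hST, hT, hSj]
      simp
    rw [hD]
    have := wpos _ hTa
    have : 0 < (-c) ^ 2 := by rw [neg_sq]; positivity
    positivity

/-- Contraction of the variance in the link of `S`, from edges to vertices. -/
lemma local_var (hC : IsPureComplex C d) (hp : IsTopDist C d pid) {S : Finset E} {j : ℕ}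
    (hS : S ∈ faces C j) (hj : j + 2 ≤ d) {b : ℝ}
    (hb : lamTwo (linkPi C d pid S 1) (linkFaces C S 1) (localWalk C d pid S) ≤ b)
    (f : Finset E → ℝ) :
    upOp C d pid j (fun R => upOp C d pid (j + 1) f R ^ 2) S
        - upOp C d pid j (upOp C d pid (j + 1) f) S ^ 2
      ≤ (1 + b) / 2 * (upOp C d pid j (upOp C d pid (j + 1) (fun T => f T ^ 2)) S
        - upOp C d pid j (upOp C d pid (j + 1) f) S ^ 2) := by
  have P := adjPair_link hC hp hS hj
  have hU := upOp_eq_sum hC hp (by omega : j < d) hS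
  have h1 := sum_link_weight hC hp (by omega : j < d) hS
  have hLB := local_bound hC hp hS hj hb
  set μ : Finset E → ℝ := fun R => (((d : ℝ) - j) * wgt C d pid S)⁻¹ * wgt C d pid R
  set ν : Finset E → ℝ := fun T =>
    (((d : ℝ) - j) * ((d : ℝ) - (j + 1 : ℕ)) * wgt C d pid S)⁻¹ * 2 * wgt C d pid T
  have hU' : ∀ φ, upOp C d pid j φ S = ∑ R ∈ above C S (j + 1), μ R * φ R := hU
  have h1' : ∑ R ∈ above C S (j + 1), μ R = 1 := h1
  have hUU : ∀ F, upOp C d pid j (upOp C d pid (j + 1) F) S = ∑ T ∈ above C S (j + 2), ν T * F T :=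
    fun F => by rw [hU', P.U_mean]
  have h2 : ∑ T ∈ above C S (j + 2), ν T = 1 := by
    have := P.U_mean (fun _ => 1)
    simp only [mul_one] at this
    rw [← this]
    exact (sum_congr rfl fun R hR => by rw [P.U_one R hR, mul_one]).trans h1'
  set h := upOp C d pid j (upOp C d pid (j + 1) f) S with hh
  have m2 : ∑ T ∈ above C S (j + 2), ν T * f T = h := (hUU f).symm
  have m1 : ∑ R ∈ above C S (j + 1), μ R * upOp C d pid (j + 1) f R = h := (hU' _).symm
  have hF : ∑ T ∈ above C S (j + 2), ν T * (f T - h) = 0 := by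
    simp only [mul_sub, sum_sub_distrib, ← sum_mul]
    rw [m2, h2]; ring
  have key := transfer_bound P.ν_nonneg P.adj (fun f hf => by rw [P.U_mean, hf])
    (local_const_pos hC hp hS hj hb).1 (fun g hg => hLB g (by rw [hU', hg])) _ hF
  rw [P.DU_eq] at key
  have hlin : ∀ R ∈ above C S (j + 1),
      upOp C d pid (j + 1) (fun T => f T - h) R = upOp C d pid (j + 1) f R - h := by
    intro R hR
    have := P.U_one R hR
    simp only [upOp, upWith, mul_sub, sum_sub_distrib, mul_one, ← sum_mul] at this ⊢
    rw [this]; ring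
  have expand : ∀ (A : Finset (Finset E)) (κ g : Finset E → ℝ), ∑ x ∈ A, κ x = 1 →
      ∑ x ∈ A, κ x * g x = h → ∑ x ∈ A, κ x * (g x - h) ^ 2 = ∑ x ∈ A, κ x * g x ^ 2 - h ^ 2 := by
    intro A κ g e1 e2
    have : ∑ x ∈ A, κ x * (g x - h) ^ 2
        = ∑ x ∈ A, κ x * g x ^ 2 - 2 * h * ∑ x ∈ A, κ x * g x + h ^ 2 * ∑ x ∈ A, κ x := by
      rw [mul_sum, mul_sum, ← sum_sub_distrib, ← sum_add_distrib]
      exact sum_congr rfl fun x _ => by ring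
    rw [this, e1, e2]; ring
  rw [sum_congr rfl fun R hR => by rw [hlin R hR], expand _ _ _ h1' m1, expand _ _ _ h2 m2] at key
  rw [hU', hUU]
  exact key

/-! ### Global levels -/

/-- The up and down operators between the levels `m` and `m + 1` of the complex form an adjoint
pair for the distributions `π_m` and `π_{m+1}`. -/
lemma adjPair_level (hC : IsPureComplex C d) (hp : IsTopDist C d pid) {m : ℕ} (hm : m < d) :
    AdjPair (faces C m) (faces C (m + 1)) (piLev C d pid m) (piLev C d pid (m + 1))
      (upOp C d pid m) (downOp (m + 1)) := by
  have hdm : (0 : ℝ) < (d : ℝ) - m := sub_pos.2 (by exact_mod_cast hm)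
  have hZ := total_pos hC hp hm.le
  have hZ' := total_pos hC hp (Nat.succ_le_of_lt hm)
  have P := adjPair_above (S := ∅) (m := m) (n := m + 1) hC hp hm (by simp) (by omega)
    (c := (((d : ℝ) - m) * ∑ T ∈ faces C m, wgt C d pid T)⁻¹) (by positivity)
  rw [above_empty, above_empty, relDown_empty] at P
  set c : ℝ := (((d : ℝ) - m) * ∑ T ∈ faces C m, wgt C d pid T)⁻¹ with hc
  have eμ : ∀ R ∈ faces C m, c * ((d : ℝ) - m) * wgt C d pid R = piLev C d pid m R := by
    intro R hR
    rw [piLev, if_pos hR, hc]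
    field_simp
  -- comparing total masses: `(m + 1) Z_{m+1} = (d - m) Z_m`
  have hmass : c * ((m + 1 : ℕ) : ℝ) * ∑ T ∈ faces C (m + 1), wgt C d pid T = 1 := by
    have := P.U_mean (fun _ => 1)
    simp only [mul_one] at this
    rw [mul_sum, ← this, sum_congr rfl fun R hR => by rw [P.U_one R hR, mul_one], ← mul_sum, hc]
    field_simp
  have eν : ∀ T ∈ faces C (m + 1),
      c * ((m + 1 : ℕ) : ℝ) * wgt C d pid T = piLev C d pid (m + 1) T := by
    intro T hT
    rw [piLev, if_pos hT, eq_div_iff hZ'.ne', mul_right_comm, hmass, one_mul]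
  refine ⟨fun R hR => eμ R hR ▸ P.μ_nonneg R hR, fun T hT => eν T hT ▸ P.ν_nonneg T hT,
    fun f g => ?_, P.U_one, P.D_one, P.sq⟩
  have := P.adj f g
  rw [sum_congr rfl fun R hR => by rw [eμ R hR]] at this
  rw [this]
  exact sum_congr rfl fun T hT => by rw [eν T hT]

/-- Averaging the local variance contraction over the faces of level `j`. -/
lemma global_step (hC : IsPureComplex C d) (hp : IsTopDist C d pid) {j : ℕ} (hj : j + 2 ≤ d)
    {b : ℝ} (hb : ∀ S ∈ faces C j,
      lamTwo (linkPi C d pid S 1) (linkFaces C S 1) (localWalk C d pid S) ≤ b)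
    (f : Finset E → ℝ) :
    ∑ R ∈ faces C (j + 1), piLev C d pid (j + 1) R * upOp C d pid (j + 1) f R ^ 2
      - ∑ S ∈ faces C j, piLev C d pid j S * upOp C d pid j (upOp C d pid (j + 1) f) S ^ 2
    ≤ (1 + b) / 2 * (∑ T ∈ faces C (j + 2), piLev C d pid (j + 2) T * f T ^ 2
      - ∑ S ∈ faces C j, piLev C d pid j S * upOp C d pid j (upOp C d pid (j + 1) f) S ^ 2) := by
  have P0 := adjPair_level hC hp (by omega : j < d)
  have P1 := adjPair_level hC hp (by omega : j + 1 < d)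
  rw [← P0.U_mean, ← P1.U_mean, ← P0.U_mean, ← sum_sub_distrib, ← sum_sub_distrib, mul_sum]
  refine sum_le_sum fun S hS => ?_
  have := mul_le_mul_of_nonneg_left (local_var hC hp hS hj (hb S hS) f) (P0.μ_nonneg S hS)
  linarith

lemma one_lt_s {b : ℝ} (h0 : 0 < (1 + b) / 2) (h1 : b < 1) : 1 < 2 / (1 + b) := by
  rw [lt_div_iff₀ (by linarith)]; linarith

lemma one_lt_vOf {a : ℕ → ℝ} {j : ℕ} (h : ∀ i ≤ j, 0 < (1 + a i) / 2 ∧ a i < 1) :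
    1 < vOf a j := by
  induction j with
  | zero => exact one_lt_s (h 0 le_rfl).1 (h 0 le_rfl).2
  | succ j ih =>
    have hv := ih fun i hi => h i (by omega)
    have hs := one_lt_s (h (j + 1) le_rfl).1 (h (j + 1) le_rfl).2
    rw [vOf]
    have : (2 / (1 + a (j + 1)) - 1) / vOf a j < 2 / (1 + a (j + 1)) - 1 :=
      div_lt_self (by linarith) hv
    linarith

/-- The contraction of the variance under the up operator, by induction on the level. When
`a_j = -1` the quotient `2 / (1 + a_j)` has the junk value `0`; this only happens at `j = d - 2`,
where the bound is `0` for `j = 0` and otherwise `v_{j-1} > 1`. -/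
lemma global_contraction (hC : IsPureComplex C d) (hp : IsTopDist C d pid)
    {a : ℕ → ℝ} (ha : ∀ j ≤ d - 2, a j < 1)
    (hexp : ∀ j ≤ d - 2, ∀ S ∈ faces C j,
      lamTwo (linkPi C d pid S 1) (linkFaces C S 1) (localWalk C d pid S) ≤ a j)
    (j : ℕ) (hj : j + 2 ≤ d) :
    0 ≤ 1 / vOf a j ∧ ∀ f : Finset E → ℝ,
      ∑ T ∈ faces C (j + 2), piLev C d pid (j + 2) T * f T = 0 →
      ∑ R ∈ faces C (j + 1), piLev C d pid (j + 1) R * upOp C d pid (j + 1) f R ^ 2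
        ≤ 1 / vOf a j * ∑ T ∈ faces C (j + 2), piLev C d pid (j + 2) T * f T ^ 2 := by
  have hpos : ∀ i, i + 2 ≤ d → 0 ≤ (1 + a i) / 2 ∧ (i + 3 ≤ d → 0 < (1 + a i) / 2) := by
    intro i hi
    obtain ⟨S, hS⟩ := exists_face hC (by omega : i ≤ d)
    exact local_const_pos hC hp hS hi (hexp i (by omega) S hS)
  induction j with
  | zero =>
    have hv : 1 / vOf a 0 = (1 + a 0) / 2 := by rw [vOf, one_div_div]
    rw [hv]
    refine ⟨(hpos 0 hj).1, fun f hf => ?_⟩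
    have key := global_step hC hp hj (hexp 0 (by omega)) f
    have P0 := adjPair_level hC hp (by omega : 0 < d)
    have P1 := adjPair_level hC hp (by omega : 0 + 1 < d)
    have h0 : faces C 0 = {∅} := by
      ext S
      rw [mem_faces, mem_singleton, card_eq_zero]
      refine ⟨fun h => h.2, fun h => ⟨?_, h⟩⟩
      obtain ⟨T, hT⟩ := hC.1
      exact hC.2.1 T hT S (h ▸ empty_subset T)
    rw [← P1.U_mean, ← P0.U_mean, h0, sum_singleton] at hf
    have : ∑ S ∈ faces C 0, piLev C d pid 0 S
        * upOp C d pid 0 (upOp C d pid (0 + 1) f) S ^ 2 = 0 := by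
      rw [h0, sum_singleton, sq, ← mul_assoc, hf, zero_mul]
    rw [this, sub_zero, sub_zero] at key
    exact key
  | succ j ih =>
    obtain ⟨hv0, IH⟩ := ih (by omega)
    have hv : 1 < vOf a j := one_lt_vOf fun i hi =>
      ⟨(hpos i (by omega)).2 (by omega), ha i (by omega)⟩
    rcases (hpos (j + 1) hj).1.eq_or_lt with hz | hl
    · have e : 1 / vOf a (j + 1) = vOf a j := by
        have : 1 + a (j + 1) = 0 := by linarith
        rw [vOf, this, div_zero]; ring_nf; rw [inv_inv]
      rw [e]
      refine ⟨by linarith, fun f _ => ?_⟩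
      have P := adjPair_level hC hp (by omega : j + 2 < d)
      have hle := P.DU_le f
      rw [P.DU_eq] at hle
      have nn : 0 ≤ ∑ T ∈ faces C (j + 3), piLev C d pid (j + 3) T * f T ^ 2 :=
        sum_nonneg fun T hT => mul_nonneg (P.ν_nonneg T hT) (sq_nonneg _)
      exact hle.trans (mul_le_mul_of_nonneg_right hv.le nn)
    · have ha1 := ha (j + 1) (by omega)
      have hs := one_lt_s hl ha1
      have hv1 : 1 < vOf a (j + 1) := one_lt_vOf fun i hi => by
        rcases Nat.lt_or_ge i (j + 1) with h | h
        · exact ⟨(hpos i (by omega)).2 (by omega), ha i (by omega)⟩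
        · obtain rfl : i = j + 1 := by omega
          exact ⟨hl, ha1⟩
      refine ⟨by positivity, fun f hf => ?_⟩
      have key := global_step hC hp hj (hexp (j + 1) (by omega)) f
      have P := adjPair_level hC hp (by omega : j + 2 < d)
      have IHf := IH (upOp C d pid (j + 2) f) (by rw [P.U_mean]; exact hf)
      change _ - ∑ S ∈ faces C (j + 1), piLev C d pid (j + 1) S
        * upOp C d pid (j + 1) (upOp C d pid (j + 2) f) S ^ 2 ≤ _ * (_ -
        ∑ S ∈ faces C (j + 1), piLev C d pid (j + 1) S
        * upOp C d pid (j + 1) (upOp C d pid (j + 2) f) S ^ 2) at key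
      change ∑ R ∈ faces C (j + 2), piLev C d pid (j + 2) R * upOp C d pid (j + 2) f R ^ 2 ≤ _
      change ∑ R ∈ faces C (j + 2), piLev C d pid (j + 2) R * upOp C d pid (j + 2) f R ^ 2 - _
        ≤ _ at key
      set M2 := ∑ R ∈ faces C (j + 2), piLev C d pid (j + 2) R * upOp C d pid (j + 2) f R ^ 2
      set M1 := ∑ S ∈ faces C (j + 1), piLev C d pid (j + 1) S
        * upOp C d pid (j + 1) (upOp C d pid (j + 2) f) S ^ 2
      set M3 := ∑ T ∈ faces C (j + 1 + 2), piLev C d pid (j + 1 + 2) T * f T ^ 2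
      rw [one_div, ← div_eq_inv_mul, le_div_iff₀ (by linarith), vOf]
      set s := 2 / (1 + a (j + 1)) with hsdef
      have hls : s * ((1 + a (j + 1)) / 2) = 1 := by
        rw [hsdef]
        have : 1 + a (j + 1) ≠ 0 := by linarith
        field_simp
      -- multiply the averaged inequality by `s = 1 / ((1 + a) / 2)`
      have k1 : s * (M2 - M1) ≤ M3 - M1 := by
        have := mul_le_mul_of_nonneg_left key (by linarith : 0 ≤ s)
        rwa [← mul_assoc, hls, one_mul] at this
      have k2 := mul_le_mul_of_nonneg_left IHf (by linarith : 0 ≤ s - 1)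
      have : M2 * (s - (s - 1) / vOf a j) = s * M2 - (s - 1) * (1 / vOf a j * M2) := by ring
      rw [this]
      linarith

/-- **Local-to-global variance contraction.** If `C` is an `(a_0, …, a_{d-2})`-local-spectral
expander with each `a_j < 1`, then for `2 ≤ k ≤ d`,
`λ₂(P_k^∨) = λ₂(P_{k-1}^∧) ≤ 1 / v_{k-2}`, where `v` is the contraction recursion built
from `s_j = 2/(1 + a_j)`. -/
theorem local_to_global_variance {E : Type*} [Fintype E] [DecidableEq E]
    (C : Finset (Finset E)) (d : ℕ) (pid : Finset E → ℝ)
    (hC : IsPureComplex C d) (hpid : IsTopDist C d pid)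
    (a : ℕ → ℝ) (ha : ∀ j ≤ d - 2, a j < 1)
    (hexp : ∀ j ≤ d - 2, ∀ S ∈ faces C j,
      lamTwo (linkPi C d pid S 1) (linkFaces C S 1) (localWalk C d pid S) ≤ a j)
    (k : ℕ) (hk2 : 2 ≤ k) (hkd : k ≤ d) :
    lamTwo (piLev C d pid k) (faces C k) (downUp C d pid k) =
      lamTwo (piLev C d pid (k-1)) (faces C (k-1)) (upDown C d pid (k-1)) ∧
    lamTwo (piLev C d pid k) (faces C k) (downUp C d pid k) ≤ 1 / vOf a (k-2) := by
  obtain ⟨j, rfl⟩ : ∃ j, k = j + 2 := ⟨k - 2, by omega⟩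
  have P := adjPair_level hC hpid (by omega : j + 1 < d)
  obtain ⟨h0, hc⟩ := global_contraction hC hpid ha hexp j hkd
  refine ⟨P.lamTwo_eq, lamTwo_le P.ν_nonneg h0 fun f hf => ?_⟩
  have := hc f hf
  rw [← P.DU_eq] at this
  exact this
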